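/- arXiv:math/0508379 — 6 statements merged into one kernel-verified Lean document; each statement's English description precedes it below -/
import Mathlib

section
/- Let L be an ideal lattice. An element a ∈ L is semi-prime if and only if a = inf V for some set V ⊆ L of prime elements. -/
open CompleteLattice TopologicalSpace

/-- An ideal lattice: a complete, compactly generated lattice with an associative
multiplication distributing over finite suprema, for which `⊤` is a compact
two-sided identity and products of compact elements are compact. -/
structure IsIdealLattice (α : Type*) [CompleteLattice α] [Mul α] : Prop where
  mul_assoc : ∀ a b c : α, a * b * c = a * (b * c)
  compactlyGenerated : ∀ a : α, a = sSup {b : α | b ≤ a ∧ IsCompactElement b}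
  mul_sup : ∀ a b c : α, a * (b ⊔ c) = a * b ⊔ a * c
  sup_mul : ∀ a b c : α, (a ⊔ b) * c = a * c ⊔ b * c
  top_compact : IsCompactElement (⊤ : α)
  top_mul : ∀ a : α, ⊤ * a = a
  mul_top : ∀ a : α, a * ⊤ = a
  compact_mul : ∀ a b : α, IsCompactElement a → IsCompactElement b → IsCompactElement (a * b)

/-- A prime element of an ideal lattice: `p ≠ ⊤` and `a * b ≤ p` implies `a ≤ p` or `b ≤ p`. -/
def IsPrimeElt {α : Type*} [CompleteLattice α] [Mul α] (p : α) : Prop :=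
  p ≠ ⊤ ∧ ∀ a b : α, a * b ≤ p → a ≤ p ∨ b ≤ p

/-- A semi-prime element of an ideal lattice: `b * b ≤ a` implies `b ≤ a`. -/
def IsSemiprimeElt {α : Type*} [CompleteLattice α] [Mul α] (a : α) : Prop :=
  ∀ b : α, b * b ≤ a → b ≤ a

/-!
If `a` is semi-prime and `¬ b ≤ a`, choose a compact `s 0 ≤ b` with `¬ s 0 ≤ a`. Semi-primeness
gives `¬ s 0 * s 0 ≤ a`, so there is a compact `s 1 ≤ s 0 * s 0` with `¬ s 1 ≤ a`, and so on. By
compactness and Zorn's lemma some `p ≥ a` is maximal among the elements above no `s n`. If neither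
`x` nor `y` is below `p`, then, since `s` is decreasing, `p ⊔ x` and `p ⊔ y` are both above some
`s n`. Hence `s (n + 1) ≤ (p ⊔ x) * (p ⊔ y) ≤ p ⊔ x * y`, and `x * y` is not below `p`. So `p` is
a prime above `a` but not above `b`.
-/

/-- A multiplication that distributes over binary joins and whose products lie below both factors.
Besides ideal lattices, this covers lattices of normal subgroups under the commutator, which is in
general neither associative nor unital. -/
structure IsMultiplicativeLattice (α : Type*) [SemilatticeSup α] [Mul α] : Prop where
  mul_sup : ∀ a b c : α, a * (b ⊔ c) = a * b ⊔ a * c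
  sup_mul : ∀ a b c : α, (a ⊔ b) * c = a * c ⊔ b * c
  mul_le_left : ∀ a b : α, a * b ≤ a
  mul_le_right : ∀ a b : α, a * b ≤ b

/-- The analogue for lattice elements of McCoy's m-systems in noncommutative rings: any two
members have a member below their product. The empty set is allowed. -/
def IsMSystem {α : Type*} [LE α] [Mul α] (S : Set α) : Prop :=
  ∀ ⦃x⦄, x ∈ S → ∀ ⦃y⦄, y ∈ S → ∃ z ∈ S, z ≤ x * y

namespace IsMultiplicativeLattice

section SemilatticeSup

variable {α : Type*} [SemilatticeSup α] [Mul α]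

theorem mul_le_mul (hL : IsMultiplicativeLattice α) {a b c d : α} (hab : a ≤ b) (hcd : c ≤ d) :
    a * c ≤ b * d :=
  calc
    a * c ≤ a * c ⊔ b * c := le_sup_left
    _ = b * c := by rw [← hL.sup_mul, sup_eq_right.mpr hab]
    _ ≤ b * c ⊔ b * d := le_sup_left
    _ = b * d := by rw [← hL.mul_sup, sup_eq_right.mpr hcd]

theorem sup_mul_sup_le (hL : IsMultiplicativeLattice α) (p x y : α) :
    (p ⊔ x) * (p ⊔ y) ≤ p ⊔ x * y := by
  rw [hL.sup_mul, hL.mul_sup x]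
  exact sup_le (le_sup_of_le_left (hL.mul_le_left _ _))
    (sup_le_sup_right (hL.mul_le_right _ _) _)

theorem isMSystem_range (hL : IsMultiplicativeLattice α) {s : ℕ → α}
    (hs : ∀ n, s (n + 1) ≤ s n * s n) : IsMSystem (Set.range s) := by
  have s_antitone : Antitone s :=
    antitone_nat_of_succ_le fun n => (hs n).trans (hL.mul_le_left _ _)
  rintro _ ⟨m, rfl⟩ _ ⟨n, rfl⟩
  exact ⟨s (max m n + 1), Set.mem_range_self _, (hs _).trans <|
    hL.mul_le_mul (s_antitone (le_max_left m n)) (s_antitone (le_max_right m n))⟩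

end SemilatticeSup

theorem isPrimeElt_of_maximal {α : Type*} [CompleteLattice α] [Mul α]
    (hL : IsMultiplicativeLattice α) {S : Set α} (hS : IsMSystem S) (hne : S.Nonempty) {p : α}
    (hp : Maximal (fun x => ∀ s ∈ S, ¬ s ≤ x) p) : IsPrimeElt p := by
  have exists_le_sup : ∀ x, ¬ x ≤ p → ∃ s ∈ S, s ≤ p ⊔ x := fun x hx => by
    simpa only [not_forall, not_not, exists_prop] using hp.not_prop_of_gt (left_lt_sup.mpr hx)
  obtain ⟨s₀, hs₀⟩ := hne
  refine ⟨fun hp_top => hp.prop s₀ hs₀ (hp_top ▸ le_top), fun x y hxy => ?_⟩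
  by_contra! hxy_not_le
  obtain ⟨s, hs, hsx⟩ := exists_le_sup x hxy_not_le.1
  obtain ⟨t, ht, hty⟩ := exists_le_sup y hxy_not_le.2
  obtain ⟨u, hu, hust⟩ := hS hs ht
  refine hp.prop u hu ?_
  calc
    u ≤ s * t := hust
    _ ≤ (p ⊔ x) * (p ⊔ y) := hL.mul_le_mul hsx hty
    _ ≤ p ⊔ x * y := hL.sup_mul_sup_le p x y
    _ = p := sup_eq_left.mpr hxy

end IsMultiplicativeLattice

theorem exists_le_maximal_of_isCompactElement {α : Type*} [CompleteLattice α] {S : Set α}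
    (hS : ∀ s ∈ S, IsCompactElement s) {a : α} (ha : ∀ s ∈ S, ¬ s ≤ a) :
    ∃ p, a ≤ p ∧ Maximal (fun x => ∀ s ∈ S, ¬ s ≤ x) p := by
  refine zorn_le_nonempty₀ {x | ∀ s ∈ S, ¬ s ≤ x} (fun C hC hchain y hy => ?_) a ha
  refine ⟨sSup C, fun s hs hle => ?_, fun z hz => le_sSup hz⟩
  obtain ⟨x, hxC, hsx⟩ :=
    hS s hs C (sSup C) ⟨y, hy⟩ hchain.directedOn (_root_.isLUB_sSup C) hle
  exact hC hxC s hs hsx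

theorem exists_isCompactElement_le_not_le {α : Type*} [CompleteLattice α]
    [IsCompactlyGenerated α] {a b : α} (h : ¬ b ≤ a) :
    ∃ c, IsCompactElement c ∧ c ≤ b ∧ ¬ c ≤ a := by
  simpa only [not_forall, exists_prop] using mt le_iff_compact_le_imp.mpr h

section Semiprime

variable {α : Type*} [CompleteLattice α] [Mul α]

theorem IsPrimeElt.isSemiprimeElt {p : α} (hp : IsPrimeElt p) : IsSemiprimeElt p :=
  fun b hb => or_self_iff.mp (hp.2 b b hb)

theorem isSemiprimeElt_sInf {V : Set α} (hV : ∀ a ∈ V, IsSemiprimeElt a) :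
    IsSemiprimeElt (sInf V) :=
  fun b hb => le_sInf fun a ha => hV a ha b (hb.trans (sInf_le ha))

variable [IsCompactlyGenerated α]

theorem IsSemiprimeElt.exists_seq {a b : α} (ha : IsSemiprimeElt a) (hb : ¬ b ≤ a) :
    ∃ s : ℕ → α, s 0 ≤ b ∧ (∀ n, s (n + 1) ≤ s n * s n) ∧
      ∀ n, IsCompactElement (s n) ∧ ¬ s n ≤ a := by
  have exists_next (c : {c : α // IsCompactElement c ∧ ¬ c ≤ a}) :
      ∃ d : {d : α // IsCompactElement d ∧ ¬ d ≤ a}, (d : α) ≤ c * c := by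
    obtain ⟨d, hd, hdc, hda⟩ := exists_isCompactElement_le_not_le (mt (ha c) c.2.2)
    exact ⟨⟨d, hd, hda⟩, hdc⟩
  choose next next_le using exists_next
  obtain ⟨c, hc, hcb, hca⟩ := exists_isCompactElement_le_not_le hb
  refine ⟨fun n => next^[n] ⟨c, hc, hca⟩, hcb, fun n => ?_, fun n => (next^[n] _).2⟩
  simp only [Function.iterate_succ_apply']
  exact next_le _

theorem IsSemiprimeElt.exists_isPrimeElt (hL : IsMultiplicativeLattice α) {a b : α}
    (ha : IsSemiprimeElt a) (hb : ¬ b ≤ a) : ∃ p, IsPrimeElt p ∧ a ≤ p ∧ ¬ b ≤ p := by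
  obtain ⟨s, hsb, hs_succ, hs⟩ := ha.exists_seq hb
  obtain ⟨p, hap, hp⟩ := exists_le_maximal_of_isCompactElement (S := Set.range s)
    (Set.forall_mem_range.mpr fun n => (hs n).1) (Set.forall_mem_range.mpr fun n => (hs n).2)
  exact ⟨p, hL.isPrimeElt_of_maximal (hL.isMSystem_range hs_succ) (Set.range_nonempty s) hp, hap,
    fun hbp => hp.prop (s 0) (Set.mem_range_self 0) (hsb.trans hbp)⟩

theorem IsSemiprimeElt.eq_sInf (hL : IsMultiplicativeLattice α) {a : α} (ha : IsSemiprimeElt a) :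
    a = sInf {p | IsPrimeElt p ∧ a ≤ p} := by
  refine le_antisymm (le_sInf fun p hp => hp.2) ?_
  by_contra h
  obtain ⟨p, hp, hap, hnp⟩ := ha.exists_isPrimeElt hL h
  exact hnp (sInf_le ⟨hp, hap⟩)

theorem semiprime_iff_sInf_primes_general (hL : IsMultiplicativeLattice α) (a : α) :
    IsSemiprimeElt a ↔ ∃ V : Set α, (∀ p ∈ V, IsPrimeElt p) ∧ a = sInf V := by
  constructor
  · exact fun ha => ⟨{p | IsPrimeElt p ∧ a ≤ p}, fun p hp => hp.1, ha.eq_sInf hL⟩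
  · rintro ⟨V, hV, rfl⟩
    exact isSemiprimeElt_sInf fun p hp => (hV p hp).isSemiprimeElt

end Semiprime

namespace IsIdealLattice

variable {α : Type*} [CompleteLattice α] [Mul α]

theorem isCompactlyGenerated (hL : IsIdealLattice α) : IsCompactlyGenerated α :=
  ⟨fun a => ⟨{b | b ≤ a ∧ IsCompactElement b}, fun _ hb => hb.2, (hL.compactlyGenerated a).symm⟩⟩

theorem isMultiplicativeLattice (hL : IsIdealLattice α) : IsMultiplicativeLattice α where
  mul_sup := hL.mul_sup
  sup_mul := hL.sup_mul
  mul_le_left a b :=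
    calc
      a * b ≤ a * b ⊔ a * ⊤ := le_sup_left
      _ = a := by rw [← hL.mul_sup, sup_top_eq, hL.mul_top]
  mul_le_right a b :=
    calc
      a * b ≤ a * b ⊔ ⊤ * b := le_sup_left
      _ = b := by rw [← hL.sup_mul, sup_top_eq, hL.top_mul]

end IsIdealLattice

/-- An element of an ideal lattice is semi-prime if and only if it is the infimum of a
set of prime elements. -/
theorem semiprime_iff_sInf_primes {α : Type*} [CompleteLattice α] [Mul α]
    (hL : IsIdealLattice α) (a : α) :
    IsSemiprimeElt a ↔ ∃ V : Set α, (∀ p ∈ V, IsPrimeElt p) ∧ a = sInf V :=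
  have := hL.isCompactlyGenerated
  semiprime_iff_sInf_primes_general hL.isMultiplicativeLattice a
end

section
/- Let L be an ideal lattice. An open subset of Spec L is quasi-compact if and only if it is of the form D(c) for some compact element c ∈ L. -/
open CompleteLattice TopologicalSpace

/-- The prime spectrum of an ideal lattice: the set of prime elements. -/
def SpecL (α : Type*) [CompleteLattice α] [Mul α] : Type _ := {p : α // IsPrimeElt p}

/-- The Zariski-closed set `V(a) = {p ∈ Spec L : a ≤ p}`. -/
def zV {α : Type*} [CompleteLattice α] [Mul α] (a : α) : Set (SpecL α) := {p | a ≤ p.1}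

/-- The Zariski-open set `D(a) = {p ∈ Spec L : a ≰ p}`. -/
def zD {α : Type*} [CompleteLattice α] [Mul α] (a : α) : Set (SpecL α) := {p | ¬ a ≤ p.1}

/-- The Zariski topology on `SpecL α`: the open sets are exactly the sets `zD a`. -/
instance {α : Type*} [CompleteLattice α] [Mul α] : TopologicalSpace (SpecL α) :=
  TopologicalSpace.generateFrom {U : Set (SpecL α) | ∃ a : α, U = zD a}

/-!
A compact open set is a finite union of basic sets `D(cᵢ)` with `cᵢ` compact, hence equal to
`D(⋁ cᵢ)`. Conversely, suppose `c` is compact and `D(c) ⊆ ⋃ D(fᵢ) = D(⋁ fᵢ)`. The compact `x` with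
`D(c) ⊆ D(x)` are closed under multiplication, because `D(xy) = D(x) ∩ D(y)`. If none of them were
below `⋁ fᵢ`, Zorn's lemma would extend `⋁ fᵢ` to a maximal element with that property; such an
element is prime, so it would be a point of `D(c)` outside `D(⋁ fᵢ)`. Hence some compact
`x ≤ ⋁ fᵢ` has `D(c) ⊆ D(x)`, and `x` lies below the supremum of finitely many `fᵢ`.
-/

/-- A multiplicative lattice: a complete lattice with a multiplication distributing over binary
suprema, in which a product lies below both of its factors. Neither associativity nor an identity
is assumed, so the commutator of normal subgroups is an example as well as the product of
ideals. -/
structure IsMultiplicativeLattice_s6 (α : Type*) [CompleteLattice α] [Mul α] : Prop where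
  mul_le_inf : ∀ a b : α, a * b ≤ a ⊓ b
  mul_sup : ∀ a b c : α, a * (b ⊔ c) = a * b ⊔ a * c
  sup_mul : ∀ a b c : α, (a ⊔ b) * c = a * c ⊔ b * c

theorem exists_maximal_forall_not_le {α : Type*} [CompleteLattice α] {S : Set α}
    (hS : ∀ x ∈ S, IsCompactElement x) {a : α} (ha : ∀ x ∈ S, ¬ x ≤ a) :
    ∃ p, a ≤ p ∧ Maximal (fun q => ∀ x ∈ S, ¬ x ≤ q) p := by
  refine zorn_le_nonempty₀ {q | ∀ x ∈ S, ¬ x ≤ q} (fun C hC hchain y hy => ?_) a ha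
  refine ⟨sSup C, fun x hx hxC => ?_, fun _ => le_sSup⟩
  obtain ⟨q, hq, hxq⟩ := hS x hx C (sSup C) ⟨y, hy⟩ hchain.directedOn (_root_.isLUB_sSup C) hxC
  exact hC hq x hx hxq

section Spectrum

variable {α : Type*} [CompleteLattice α] [Mul α]

theorem zD_top : zD (⊤ : α) = Set.univ :=
  Set.eq_univ_of_forall fun p h => p.2.1 (top_le_iff.1 h)

theorem zD_mono {a b : α} (h : a ≤ b) : zD a ⊆ zD b :=
  fun _ ha hb => ha (h.trans hb)

theorem zD_iSup {ι : Sort*} (f : ι → α) : zD (⨆ i, f i) = ⋃ i, zD (f i) := by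
  ext p
  simp [zD]

theorem isOpen_zD (a : α) : IsOpen (zD a) :=
  isOpen_generateFrom_of_mem ⟨a, rfl⟩

end Spectrum

namespace IsMultiplicativeLattice_s6

variable {α : Type*} [CompleteLattice α] [Mul α] {a b c p x y : α}

theorem mul_le_mul_s6 (hM : IsMultiplicativeLattice_s6 α) (hab : a ≤ b) (hxy : x ≤ y) :
    a * x ≤ b * y :=
  calc a * x ≤ a * x ⊔ b * x := le_sup_left
    _ = b * x := by rw [← hM.sup_mul, sup_eq_right.2 hab]
    _ ≤ b * x ⊔ b * y := le_sup_left
    _ = b * y := by rw [← hM.mul_sup, sup_eq_right.2 hxy]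

theorem sup_mul_sup_le_s6 (hM : IsMultiplicativeLattice_s6 α) (p a b : α) :
    (p ⊔ a) * (p ⊔ b) ≤ p ⊔ a * b :=
  calc (p ⊔ a) * (p ⊔ b) = p * (p ⊔ b) ⊔ (a * p ⊔ a * b) := by rw [hM.sup_mul, hM.mul_sup a]
    _ ≤ p ⊔ (p ⊔ a * b) := by
      gcongr
      · exact (hM.mul_le_inf _ _).trans inf_le_left
      · exact (hM.mul_le_inf _ _).trans inf_le_right
    _ = p ⊔ a * b := by rw [← sup_assoc, sup_idem]

theorem mul_le_iff_of_isPrimeElt (hM : IsMultiplicativeLattice_s6 α) (hp : IsPrimeElt p) :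
    a * b ≤ p ↔ a ≤ p ∨ b ≤ p :=
  ⟨hp.2 a b, fun h =>
    (hM.mul_le_inf a b).trans (h.elim inf_le_of_left_le inf_le_of_right_le)⟩

theorem isPrimeElt_of_maximal_s6 (hM : IsMultiplicativeLattice_s6 α) {S : Set α} (hS : S.Nonempty)
    (hmul : ∀ x ∈ S, ∀ y ∈ S, x * y ∈ S) (hp : Maximal (fun q => ∀ x ∈ S, ¬ x ≤ q) p) :
    IsPrimeElt p := by
  have exists_le_sup {b : α} (hb : ¬ b ≤ p) : ∃ x ∈ S, x ≤ p ⊔ b := by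
    by_contra! h
    exact hb (le_sup_right.trans (hp.2 h le_sup_left))
  refine ⟨?_, fun b c hbc => ?_⟩
  · rintro rfl
    obtain ⟨x, hx⟩ := hS
    exact hp.1 x hx le_top
  · by_contra! h
    obtain ⟨x, hx, hxb⟩ := exists_le_sup h.1
    obtain ⟨y, hy, hyc⟩ := exists_le_sup h.2
    refine hp.1 (x * y) (hmul x hx y hy) ?_
    calc x * y ≤ (p ⊔ b) * (p ⊔ c) := hM.mul_le_mul_s6 hxb hyc
      _ ≤ p ⊔ b * c := hM.sup_mul_sup_le_s6 p b c
      _ = p := sup_eq_left.2 hbc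

theorem zD_mul (hM : IsMultiplicativeLattice_s6 α) (a b : α) : zD (a * b) = zD a ∩ zD b := by
  ext p
  simp only [zD, Set.mem_inter_iff, Set.mem_ofPred_eq, hM.mul_le_iff_of_isPrimeElt p.2, not_or]

theorem isOpen_iff_exists_eq_zD (hM : IsMultiplicativeLattice_s6 α) {U : Set (SpecL α)} :
    IsOpen U ↔ ∃ a : α, U = zD a := by
  refine ⟨fun hU => ?_, fun ⟨a, ha⟩ => ha ▸ isOpen_zD a⟩
  induction hU with
  | basic _ hU => exact hU
  | univ => exact ⟨⊤, zD_top.symm⟩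
  | inter U V _ _ hU hV =>
    obtain ⟨a, rfl⟩ := hU
    obtain ⟨b, rfl⟩ := hV
    exact ⟨a * b, (hM.zD_mul a b).symm⟩
  | sUnion S _ hS =>
    choose f hf using hS
    refine ⟨⨆ U : S, f U U.2, ?_⟩
    rw [zD_iSup, Set.sUnion_eq_iUnion]
    exact Set.iUnion_congr fun U => hf U U.2

theorem isTopologicalBasis_zD_isCompactElement [IsCompactlyGenerated α]
    (hM : IsMultiplicativeLattice_s6 α) :
    IsTopologicalBasis (Set.range fun c : {c : α // IsCompactElement c} => zD c.1) := by
  refine isTopologicalBasis_of_isOpen_of_nhds ?_ fun p U hpU hU => ?_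
  · rintro _ ⟨c, rfl⟩
    exact isOpen_zD c.1
  · obtain ⟨a, rfl⟩ := hM.isOpen_iff_exists_eq_zD.1 hU
    obtain ⟨c, hc, hca, hcp⟩ : ∃ c, IsCompactElement c ∧ c ≤ a ∧ ¬ c ≤ p.1 := by
      by_contra! h
      exact hpU (le_iff_compact_le_imp.2 h)
    exact ⟨zD c, ⟨⟨c, hc⟩, rfl⟩, hcp, zD_mono hca⟩

theorem exists_isCompactElement_eq_zD [IsCompactlyGenerated α] (hM : IsMultiplicativeLattice_s6 α)
    {U : Set (SpecL α)} (hU : IsOpen U) (hUc : IsCompact U) :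
    ∃ c : α, IsCompactElement c ∧ U = zD c := by
  obtain ⟨s, hs, hUs⟩ := eq_finite_iUnion_of_isTopologicalBasis_of_isCompact_open _
    hM.isTopologicalBasis_zD_isCompactElement U hUc hU
  refine ⟨hs.toFinset.sup Subtype.val, isCompactElement_finsetSup _ fun c _ => c.2, ?_⟩
  simpa only [Finset.sup_eq_iSup, zD_iSup, Set.Finite.mem_toFinset] using hUs

theorem exists_isCompactElement_le_of_zD_subset (hM : IsMultiplicativeLattice_s6 α)
    (hmul : ∀ x y : α, IsCompactElement x → IsCompactElement y → IsCompactElement (x * y))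
    (hc : IsCompactElement c) (h : zD c ⊆ zD a) :
    ∃ x : α, IsCompactElement x ∧ x ≤ a ∧ zD c ⊆ zD x := by
  let S : Set α := {x | IsCompactElement x ∧ zD c ⊆ zD x}
  have hcS : c ∈ S := ⟨hc, subset_rfl⟩
  have hSmul : ∀ x ∈ S, ∀ y ∈ S, x * y ∈ S := fun x hx y hy =>
    ⟨hmul x y hx.1 hy.1, hM.zD_mul x y ▸ Set.subset_inter hx.2 hy.2⟩
  by_contra! hSa
  obtain ⟨p, hap, hp⟩ := exists_maximal_forall_not_le (S := S) (fun x hx => hx.1)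
    fun x hx hxa => hSa x hx.1 hxa hx.2
  have hprime : IsPrimeElt p := hM.isPrimeElt_of_maximal_s6 ⟨c, hcS⟩ hSmul hp
  exact h (a := ⟨p, hprime⟩) (hp.1 c hcS) hap

theorem isCompact_zD (hM : IsMultiplicativeLattice_s6 α)
    (hmul : ∀ x y : α, IsCompactElement x → IsCompactElement y → IsCompactElement (x * y))
    (hc : IsCompactElement c) : IsCompact (zD c) := by
  refine isCompact_of_finite_subcover fun U hU hcU => ?_
  choose f hf using fun i => hM.isOpen_iff_exists_eq_zD.1 (hU i)
  simp only [hf, ← zD_iSup] at hcU ⊢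
  obtain ⟨x, hx, hxf, hcx⟩ := hM.exists_isCompactElement_le_of_zD_subset hmul hc hcU
  obtain ⟨t, hxt⟩ := IsCompactElement.exists_finset_of_le_iSup _ hx f hxf
  exact ⟨t, hcx.trans (zD_mono hxt)⟩

end IsMultiplicativeLattice_s6

theorem isCompact_open_iff_zD_compact_general {α : Type*} [CompleteLattice α] [Mul α]
    [IsCompactlyGenerated α] (hM : IsMultiplicativeLattice_s6 α)
    (hmul : ∀ x y : α, IsCompactElement x → IsCompactElement y → IsCompactElement (x * y))
    (U : Set (SpecL α)) (hU : IsOpen U) :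
    IsCompact U ↔ ∃ c : α, IsCompactElement c ∧ U = zD c :=
  ⟨hM.exists_isCompactElement_eq_zD hU, fun ⟨_, hc, hUc⟩ => hUc ▸ hM.isCompact_zD hmul hc⟩

namespace IsIdealLattice

variable {α : Type*} [CompleteLattice α] [Mul α]

theorem isMultiplicativeLattice_s6 (hL : IsIdealLattice α) : IsMultiplicativeLattice_s6 α where
  mul_le_inf a b := by
    refine le_inf ?_ ?_
    · calc a * b ≤ a * b ⊔ a * ⊤ := le_sup_left
        _ = a := by rw [← hL.mul_sup, sup_top_eq, hL.mul_top]
    · calc a * b ≤ a * b ⊔ ⊤ * b := le_sup_left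
        _ = b := by rw [← hL.sup_mul, sup_top_eq, hL.top_mul]
  mul_sup := hL.mul_sup
  sup_mul := hL.sup_mul

end IsIdealLattice

/-- An open subset of `Spec L` is quasi-compact if and only if it is of the form `D(c)`
for some compact element `c ∈ L`. -/
theorem isCompact_open_iff_zD_compact {α : Type*} [CompleteLattice α] [Mul α]
    (hL : IsIdealLattice α) (U : Set (SpecL α)) (hU : IsOpen U) :
    IsCompact U ↔ ∃ c : α, IsCompactElement c ∧ U = zD c := by
  have := hL.isCompactlyGenerated
  exact isCompact_open_iff_zD_compact_general hL.isMultiplicativeLattice_s6 hL.compact_mul U hU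
end

section
/- Let X be a spectral space and let L = L_open(X) be the ideal lattice of open subsets of X with multiplication UV = U ∩ V. Then the map X → Spec L sending x to the open set X \ closure({x}) is a homeomorphism from X onto the prime spectrum Spec L with its Zariski topology. -/
/-! Complementation identifies the primes of the lattice of opens with the irreducible closed
subsets, so in a sober space each prime is the complement of the closure of a point. A point lies in
an open set `U` exactly when `U` is not below the prime attached to it, so `zD U` pulls back to `U`
and the topology of `X` is induced from the Zariski topology; injectivity is then the T0 axiom. -/

open CompleteLattice TopologicalSpace

/-- A spectral space: T0 and quasi-compact, the quasi-compact open subsets are closed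
under finite intersections and form a basis of the topology, and every non-empty
irreducible closed subset has a generic point. -/
structure IsSpectralSpace (X : Type*) [TopologicalSpace X] : Prop where
  t0 : T0Space X
  compact : CompactSpace X
  inter : ∀ U V : Set X, IsOpen U → IsCompact U → IsOpen V → IsCompact V →
    IsCompact (U ∩ V)
  basis : TopologicalSpace.IsTopologicalBasis {U : Set X | IsOpen U ∧ IsCompact U}
  sober : QuasiSober X

/-- The lattice of open subsets with multiplication given by intersection. -/
instance (X : Type*) [TopologicalSpace X] : Mul (Opens X) := ⟨fun U V => U ⊓ V⟩

section PrimeOpens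

variable {X : Type*} [TopologicalSpace X]

theorem isPrimeElt_opens_iff_isIrreducible_compl {P : Opens X} :
    IsPrimeElt P ↔ IsIrreducible (P : Set X)ᶜ := by
  refine and_congr ?_ ?_
  · rw [Set.nonempty_compl, Ne, Ne, ← Opens.coe_eq_univ]
  · have meets_compl_iff (U : Opens X) : ((P : Set X)ᶜ ∩ U).Nonempty ↔ ¬ U ≤ P := by
      rw [Set.inter_comm, Set.inter_compl_nonempty_iff, SetLike.coe_subset_coe]
    have isPreirreducible_compl_iff :
        IsPreirreducible (P : Set X)ᶜ ↔ ∀ U V : Opens X, ¬ U ≤ P → ¬ V ≤ P → ¬ U * V ≤ P := by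
      simp only [← meets_compl_iff]
      exact ⟨fun h U V => h U V U.isOpen V.isOpen, fun h U V hU hV => h ⟨U, hU⟩ ⟨V, hV⟩⟩
    rw [isPreirreducible_compl_iff]
    exact forall₂_congr fun U V => by tauto

theorem isPrimeElt_compl_closure_singleton (x : X) :
    IsPrimeElt (⟨(closure {x})ᶜ, isClosed_closure.isOpen_compl⟩ : Opens X) := by
  rw [isPrimeElt_opens_iff_isIrreducible_compl, Opens.coe_mk, compl_compl]
  exact isIrreducible_singleton.closure

/-- The prime `X \ closure {x}` of the lattice of opens attached to a point `x`; it is the largest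
open set avoiding `x`. -/
def SpecL.ofPoint (x : X) : SpecL (Opens X) :=
  ⟨⟨(closure {x})ᶜ, isClosed_closure.isOpen_compl⟩, isPrimeElt_compl_closure_singleton x⟩

namespace SpecL

theorem ofPoint_eq_iff_isGenericPoint {x : X} {p : SpecL (Opens X)} :
    ofPoint x = p ↔ IsGenericPoint x (p.1 : Set X)ᶜ :=
  calc
    ofPoint x = p ↔ (closure {x})ᶜ = (p.1 : Set X) := Subtype.ext_iff.trans SetLike.ext'_iff
    _ ↔ (p.1 : Set X)ᶜ = closure {x} := compl_eq_comm
    _ ↔ IsGenericPoint x (p.1 : Set X)ᶜ := eq_comm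

theorem ofPoint_surjective [QuasiSober X] :
    Function.Surjective (ofPoint : X → SpecL (Opens X)) := fun p =>
  have hp : IsIrreducible (p.1 : Set X)ᶜ := isPrimeElt_opens_iff_isIrreducible_compl.1 p.2
  (QuasiSober.sober hp p.1.isOpen.isClosed_compl).imp fun _ => ofPoint_eq_iff_isGenericPoint.2

theorem le_ofPoint_iff {U : Opens X} {x : X} : U ≤ (ofPoint x).1 ↔ x ∉ U := by
  change (U : Set X) ⊆ (closure {x})ᶜ ↔ x ∈ (U : Set X)ᶜ
  rw [Set.subset_compl_comm, U.isOpen.isClosed_compl.closure_subset_iff, Set.singleton_subset_iff]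

theorem preimage_ofPoint_zD (U : Opens X) : ofPoint ⁻¹' zD U = (U : Set X) :=
  Set.ext fun _ => le_ofPoint_iff.not_left

theorem isInducing_ofPoint : Topology.IsInducing (ofPoint : X → SpecL (Opens X)) := by
  have preimages_eq_opens :
      Set.preimage ofPoint '' {V : Set (SpecL (Opens X)) | ∃ U : Opens X, V = zD U} =
        {U : Set X | IsOpen U} := by
    ext U
    constructor
    · rintro ⟨_, ⟨U, rfl⟩, rfl⟩
      exact (preimage_ofPoint_zD U).symm ▸ U.isOpen
    · exact fun hU => ⟨zD ⟨U, hU⟩, ⟨_, rfl⟩, preimage_ofPoint_zD ⟨U, hU⟩⟩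
  refine ⟨(induced_generateFrom_eq.trans ?_).symm⟩
  rw [preimages_eq_opens, generateFrom_setOfPred_isOpen]

end SpecL

theorem spectral_homeo_specL_opens_general [T0Space X] [QuasiSober X] :
    ∃ e : X ≃ₜ SpecL (Opens X),
      ∀ x : X, ((e x).1 : Opens X) =
        ⟨(closure {x})ᶜ, isClosed_closure.isOpen_compl⟩ :=
  have bijective_ofPoint : Function.Bijective (SpecL.ofPoint : X → SpecL (Opens X)) :=
    ⟨SpecL.isInducing_ofPoint.injective, SpecL.ofPoint_surjective⟩
  ⟨(Equiv.ofBijective _ bijective_ofPoint).toHomeomorphOfIsInducing SpecL.isInducing_ofPoint,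
    fun _ => rfl⟩

end PrimeOpens

/-- For a spectral space `X`, the map `x ↦ X \ closure {x}` is a homeomorphism from `X`
onto the prime spectrum of the ideal lattice of open subsets of `X` (with its Zariski
topology). -/
theorem spectral_homeo_specL_opens {X : Type*} [TopologicalSpace X]
    (hX : IsSpectralSpace X) :
    ∃ e : X ≃ₜ SpecL (Opens X),
      ∀ x : X, ((e x).1 : Opens X) =
        ⟨(closure {x})ᶜ, isClosed_closure.isOpen_compl⟩ := by
  have := hX.t0
  have := hX.sober
  exact spectral_homeo_specL_opens_general
end

section
/- Let L be an ideal lattice and let (X, δ) be a spectrum of L, i.e., X is a topological space and δ assigns to each a ∈ L an open subset δ(a) ⊆ X such that δ(sup A) = ⋃_{a ∈ A} δ(a) for every A ⊆ L, δ(1) = X, and δ(ab) = δ(a) ∩ δ(b) for all a, b ∈ L. Then there exists a unique continuous map f : X → Spec L such that δ(a) = f⁻¹(D(a)) for every a ∈ L; this map is given by f(x) = sup{c ∈ L : c compact and x ∉ δ(c)}. -/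
open CompleteLattice TopologicalSpace

/-!
At a point `x` of a spectrum `(X, δ)`, the elements `a` with `x ∉ δ a` form a principal ideal,
because `δ` turns suprema into unions, and its greatest element is prime, because `δ ⊤ = X` and
`δ a ∩ δ b ⊆ δ (a * b)`. The condition `δ a = f ⁻¹' D(a)` for all `a` says exactly that `f x` is
this greatest element for every `x`. It is also the supremum of the members of the ideal taken from
any set of generators of the lattice, the compact elements being one such set.
-/

section

variable {α X : Type*} [CompleteLattice α]

/-- The element of the lattice determined by a point `x` under a family `δ : α → Set X`: the
supremum of the elements `a` vanishing at `x`, that is, with `x ∉ δ a`. It need not itself vanish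
at `x` unless `δ` preserves suprema. -/
def vanishingElt (δ : α → Set X) (x : X) : α := sSup {a | x ∉ δ a}

theorem le_vanishingElt_iff_notMem (φ : sSupHom α (Set X)) (x : X) (a : α) :
    a ≤ vanishingElt φ x ↔ x ∉ φ a := by
  have vanishing : x ∉ φ (vanishingElt φ x) := by
    simp [vanishingElt, map_sSup]
  exact ⟨fun ha hx => vanishing (OrderHomClass.mono φ ha hx), fun hx => le_sSup hx⟩

variable [Mul α]

theorem isPrimeElt_vanishingElt (φ : sSupHom α (Set X)) {x : X} (htop : x ∈ φ ⊤)
    (hmul : ∀ a b : α, φ a ∩ φ b ⊆ φ (a * b)) : IsPrimeElt (vanishingElt φ x) := by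
  refine ⟨fun h => (le_vanishingElt_iff_notMem φ x ⊤).mp h.ge htop, fun a b hab => ?_⟩
  simp only [le_vanishingElt_iff_notMem] at hab ⊢
  exact not_and_or.mp fun hx => hab (hmul a b hx)

/-- The map to the prime spectrum classifying the spectrum `(X, φ)`. -/
def toSpecL (φ : sSupHom α (Set X)) (htop : φ ⊤ = Set.univ)
    (hmul : ∀ a b : α, φ a ∩ φ b ⊆ φ (a * b)) (x : X) : SpecL α :=
  ⟨vanishingElt φ x, isPrimeElt_vanishingElt φ (htop ▸ Set.mem_univ x) hmul⟩

theorem toSpecL_preimage_zD (φ : sSupHom α (Set X)) (htop : φ ⊤ = Set.univ)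
    (hmul : ∀ a b : α, φ a ∩ φ b ⊆ φ (a * b)) (a : α) :
    toSpecL φ htop hmul ⁻¹' zD a = φ a :=
  Set.ext fun x => (le_vanishingElt_iff_notMem φ x a).not_left

theorem continuous_iff_isOpen_preimage_zD [TopologicalSpace X] {f : X → SpecL α} :
    Continuous f ↔ ∀ a : α, IsOpen (f ⁻¹' zD a) := by
  rw [continuous_generateFrom_iff]
  exact ⟨fun h a => h _ ⟨a, rfl⟩, by rintro h _ ⟨a, rfl⟩; exact h a⟩

theorem le_val_iff_notMem_of_eq_preimage_zD {δ : α → Set X} {f : X → SpecL α}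
    (hf : ∀ a : α, δ a = f ⁻¹' zD a) (x : X) (a : α) : a ≤ (f x).1 ↔ x ∉ δ a := by
  rw [hf a]
  exact not_not.symm

theorem val_eq_vanishingElt_of_eq_preimage_zD {δ : α → Set X} {f : X → SpecL α}
    (hf : ∀ a : α, δ a = f ⁻¹' zD a) (x : X) : (f x).1 = vanishingElt δ x := by
  simp only [vanishingElt, ← le_val_iff_notMem_of_eq_preimage_zD hf]
  exact isLUB_Iic.sSup_eq.symm

theorem val_eq_sSup_of_eq_preimage_zD {δ : α → Set X} {f : X → SpecL α}
    (hf : ∀ a : α, δ a = f ⁻¹' zD a) {x : X} {B : Set α}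
    (hB : IsLUB {b ∈ B | b ≤ (f x).1} (f x).1) : (f x).1 = sSup {b ∈ B | x ∉ δ b} := by
  simp only [← le_val_iff_notMem_of_eq_preimage_zD hf, hB.sSup_eq]

end

theorem IsIdealLattice.isLUB_isCompactElement_le {α : Type*} [CompleteLattice α] [Mul α]
    (hL : IsIdealLattice α) (a : α) : IsLUB {c | IsCompactElement c ∧ c ≤ a} a :=
  ⟨fun _ hc => hc.2,
    fun _ hu => (hL.compactlyGenerated a).trans_le (sSup_le fun _ hc => hu hc.symm)⟩

theorem spectrum_universal_property_general {α : Type*} [CompleteLattice α] [Mul α]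
    {X : Type*} [TopologicalSpace X]
    (δ : α → Set X) (hopen : ∀ a : α, IsOpen (δ a))
    (hsup : ∀ A : Set α, δ (sSup A) = ⋃ a ∈ A, δ a)
    (htop : δ ⊤ = Set.univ)
    (hmul : ∀ a b : α, δ a ∩ δ b ⊆ δ (a * b)) :
    (∃! f : X → SpecL α, Continuous f ∧ ∀ a : α, δ a = f ⁻¹' zD a) ∧
    (∀ f : X → SpecL α, (∀ a : α, δ a = f ⁻¹' zD a) →
      ∀ B : Set α, (∀ a : α, IsLUB {b ∈ B | b ≤ a} a) →
        ∀ x : X, (f x).1 = sSup {b ∈ B | x ∉ δ b}) := by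
  let φ : sSupHom α (Set X) := ⟨δ, fun A => (hsup A).trans sSup_image.symm⟩
  have preimage_zD (a : α) : toSpecL φ htop hmul ⁻¹' zD a = δ a := toSpecL_preimage_zD φ htop hmul a
  refine ⟨⟨toSpecL φ htop hmul, ⟨?_, fun a => (preimage_zD a).symm⟩, fun f hf => ?_⟩,
    fun f hf B hB x => val_eq_sSup_of_eq_preimage_zD hf (hB _)⟩
  · exact continuous_iff_isOpen_preimage_zD.mpr fun a => (preimage_zD a).symm ▸ hopen a
  · exact funext fun x => Subtype.ext (val_eq_vanishingElt_of_eq_preimage_zD hf.2 x)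

/-- Universal property of `(Spec L, D)`: for every spectrum `(X, δ)` of `L` there is a
unique continuous map `f : X → Spec L` with `δ(a) = f⁻¹(D(a))` for all `a`, and this
map is given by `f(x) = sup {c compact : x ∉ δ(c)}`. -/
theorem spectrum_universal_property {α : Type*} [CompleteLattice α] [Mul α]
    {X : Type*} [TopologicalSpace X] (hL : IsIdealLattice α)
    (δ : α → Set X) (hopen : ∀ a : α, IsOpen (δ a))
    (hsup : ∀ A : Set α, δ (sSup A) = ⋃ a ∈ A, δ a)
    (htop : δ ⊤ = Set.univ)
    (hmul : ∀ a b : α, δ (a * b) = δ a ∩ δ b) :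
    (∃! f : X → SpecL α, Continuous f ∧ ∀ a : α, δ a = f ⁻¹' zD a) ∧
    (∀ f : X → SpecL α, Continuous f → (∀ a : α, δ a = f ⁻¹' zD a) →
      ∀ x : X, (f x).1 = sSup {c : α | IsCompactElement c ∧ x ∉ δ c}) := by
  obtain ⟨existsUnique, formula⟩ :=
    spectrum_universal_property_general δ hopen hsup htop fun a b => (hmul a b).ge
  exact ⟨existsUnique, fun f _ hf => formula f hf _ hL.isLUB_isCompactElement_le⟩
end

section
/- Let φ : L → L' be a morphism of ideal lattices. Then there is a unique continuous map Spec φ : Spec L' → Spec L such that D(φ(a)) = (Spec φ)⁻¹(D(a)) for all a ∈ L; explicitly, (Spec φ)(p) = sup{a ∈ L : φ(a) ≤ p} for p ∈ Spec L'. -/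
open CompleteLattice TopologicalSpace

/-- A morphism of ideal lattices: preserves arbitrary suprema, the top element and the
multiplication. -/
def IsIdealLatticeHom {α β : Type*} [CompleteLattice α] [Mul α]
    [CompleteLattice β] [Mul β] (φ : α → β) : Prop :=
  (∀ A : Set α, φ (sSup A) = sSup (φ '' A)) ∧ φ ⊤ = ⊤ ∧ ∀ a b : α, φ (a * b) = φ a * φ b

/-!
The condition `zD (φ a) = g ⁻¹' zD a` for all `a` says that `φ a ≤ p ↔ a ≤ g p` for all `a` and all
primes `p`. So `g` must be the restriction to prime elements of the right adjoint of `φ`. This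
adjoint exists because `φ` preserves suprema, and it sends primes to primes because `φ` respects
products and `⊤`.
-/

theorem galoisConnection_sSup_setOf_le {α β : Type*} [CompleteLattice α] [CompleteLattice β]
    {φ : α → β} (map_sSup : ∀ A : Set α, φ (sSup A) = sSup (φ '' A)) :
    GaloisConnection φ fun b => sSup {a : α | φ a ≤ b} := by
  have mono : Monotone φ := OrderHomClass.mono (sSupHom.mk φ map_sSup)
  have counit (b : β) : φ (sSup {a : α | φ a ≤ b}) ≤ b := by
    rw [map_sSup]
    exact sSup_le (Set.forall_mem_image.2 fun _ ha => ha)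
  exact fun _ b => ⟨fun h => le_sSup h, fun h => (mono h).trans (counit b)⟩

section

variable {α β : Type*} [CompleteLattice α] [Mul α] [CompleteLattice β] [Mul β] {φ : α → β}

theorem IsPrimeElt.of_galoisConnection {ψ : β → α} (gc : GaloisConnection φ ψ)
    (map_top : φ ⊤ = ⊤) (mul_le_map_mul : ∀ a b : α, φ a * φ b ≤ φ (a * b))
    {p : β} (hp : IsPrimeElt p) : IsPrimeElt (ψ p) := by
  refine ⟨fun h => hp.1 ?_, fun a b hab => ?_⟩
  · rwa [gc.u_eq_top, map_top, top_le_iff] at h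
  · rw [← gc.le_iff_le] at hab
    exact (hp.2 _ _ ((mul_le_map_mul a b).trans hab)).imp (gc a p).1 (gc b p).1

/-- The map of spectra `Spec φ : Spec L' → Spec L` induced by `φ : L → L'`, obtained by restricting
a right adjoint `ψ` of `φ` to prime elements. -/
def specMap {ψ : β → α} (gc : GaloisConnection φ ψ) (map_top : φ ⊤ = ⊤)
    (mul_le_map_mul : ∀ a b : α, φ a * φ b ≤ φ (a * b)) : SpecL β → SpecL α :=
  fun p => ⟨ψ p.1, p.2.of_galoisConnection gc map_top mul_le_map_mul⟩

theorem zD_eq_preimage_iff {g : SpecL β → SpecL α} {a : α} :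
    zD (φ a) = g ⁻¹' zD a ↔ ∀ p : SpecL β, φ a ≤ p.1 ↔ a ≤ (g p).1 :=
  Set.ext_iff.trans (forall_congr' fun _ => not_iff_not)

theorem zD_eq_preimage_specMap {ψ : β → α} (gc : GaloisConnection φ ψ) (map_top : φ ⊤ = ⊤)
    (mul_le_map_mul : ∀ a b : α, φ a * φ b ≤ φ (a * b)) (a : α) :
    zD (φ a) = specMap gc map_top mul_le_map_mul ⁻¹' zD a :=
  zD_eq_preimage_iff.2 fun p => gc a p.1

theorem continuous_of_zD_eq_preimage {g : SpecL β → SpecL α}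
    (hg : ∀ a : α, zD (φ a) = g ⁻¹' zD a) : Continuous g := by
  refine continuous_generateFrom_iff.2 ?_
  rintro _ ⟨a, rfl⟩
  exact isOpen_generateFrom_of_mem ⟨φ a, (hg a).symm⟩

theorem val_eq_sSup_of_zD_eq_preimage {g : SpecL β → SpecL α}
    (hg : ∀ a : α, zD (φ a) = g ⁻¹' zD a) (p : SpecL β) :
    (g p).1 = sSup {a : α | φ a ≤ p.1} := by
  have setOf_le_eq_Iic : {a : α | φ a ≤ p.1} = Set.Iic (g p).1 :=
    Set.ext fun a => zD_eq_preimage_iff.1 (hg a) p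
  rw [setOf_le_eq_Iic, isLUB_Iic.sSup_eq]

end

theorem spec_functorial_general {α β : Type*} [CompleteLattice α] [Mul α]
    [CompleteLattice β] [Mul β] (φ : α → β)
    (map_sSup : ∀ A : Set α, φ (sSup A) = sSup (φ '' A)) (map_top : φ ⊤ = ⊤)
    (mul_le_map_mul : ∀ a b : α, φ a * φ b ≤ φ (a * b)) :
    (∃! g : SpecL β → SpecL α, Continuous g ∧ ∀ a : α, zD (φ a) = g ⁻¹' zD a) ∧
    (∀ g : SpecL β → SpecL α, (∀ a : α, zD (φ a) = g ⁻¹' zD a) →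
      ∀ p : SpecL β, (g p).1 = sSup {a : α | φ a ≤ p.1}) := by
  have preimage_specMap := zD_eq_preimage_specMap
    (galoisConnection_sSup_setOf_le map_sSup) map_top mul_le_map_mul
  refine ⟨⟨_, ⟨continuous_of_zD_eq_preimage preimage_specMap, preimage_specMap⟩, ?_⟩,
    fun _ => val_eq_sSup_of_zD_eq_preimage⟩
  rintro g ⟨-, hg⟩
  exact funext fun p => Subtype.ext (val_eq_sSup_of_zD_eq_preimage hg p)

/-- A morphism `φ : L → L'` of ideal lattices induces a unique continuous map
`Spec φ : Spec L' → Spec L` with `D(φ(a)) = (Spec φ)⁻¹(D(a))` for all `a ∈ L`;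
explicitly `(Spec φ)(p) = sup {a : φ(a) ≤ p}`. -/
theorem spec_functorial {α β : Type*} [CompleteLattice α] [Mul α]
    [CompleteLattice β] [Mul β] (hL : IsIdealLattice α) (hL' : IsIdealLattice β)
    (φ : α → β) (hφ : IsIdealLatticeHom φ) :
    (∃! g : SpecL β → SpecL α, Continuous g ∧ ∀ a : α, zD (φ a) = g ⁻¹' zD a) ∧
    (∀ g : SpecL β → SpecL α, Continuous g → (∀ a : α, zD (φ a) = g ⁻¹' zD a) →
      ∀ p : SpecL β, (g p).1 = sSup {a : α | φ a ≤ p.1}) := by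
  have ⟨existsUnique, val_eq⟩ :=
    spec_functorial_general φ hφ.1 hφ.2.1 fun a b => (hφ.2.2 a b).ge
  exact ⟨existsUnique, fun g _ => val_eq g⟩
end

section
/- Let L be an ideal lattice and X a spectral space. Then the maps Σ : φ ↦ (x ↦ sup{c ∈ L : c compact and x ∉ φ(c)}) and Λ : f ↦ (a ↦ f⁻¹(D(a))) are mutually inverse bijections between the set of ideal-lattice morphisms φ : L → L_open(X) (where L_open(X) is the lattice of open subsets of X with multiplication given by intersection) and the set of continuous maps f : X → Spec L. -/
open CompleteLattice TopologicalSpace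

/-!
If `φ : L → L_open(X)` preserves suprema then, for each point `x`, the elements `a` with `x ∉ φ a`
are those below their supremum `p`, which in a compactly generated lattice is already the supremum
of the compact ones. Since `φ` also respects `⊤` and products, `p` is prime. Thus
`a ≤ p ↔ x ∉ φ a`, which says both that `φ a` is the preimage of `D(a)` under `x ↦ p` and that `φ`
and `x ↦ p` determine each other.
-/

namespace IsIdealLattice

variable {α : Type*} [CompleteLattice α] [Mul α]

theorem mul_le_inf (hL : IsIdealLattice α) (a b : α) : a * b ≤ a ⊓ b := by
  refine le_inf ?_ ?_
  · calc
      a * b ≤ a * b ⊔ a * ⊤ := le_sup_left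
      _ = a := by rw [← hL.mul_sup, sup_top_eq, hL.mul_top]
  · calc
      a * b ≤ a * b ⊔ ⊤ * b := le_sup_left
      _ = b := by rw [← hL.sup_mul, sup_top_eq, hL.top_mul]

end IsIdealLattice

namespace SpecL

variable {α : Type*} [CompleteLattice α] [Mul α]

theorem zD_top : zD (⊤ : α) = Set.univ :=
  Set.eq_univ_of_forall fun p hp => p.2.1 (top_le_iff.mp hp)

theorem zD_sSup (A : Set α) : zD (sSup A) = ⋃ a ∈ A, zD a := by
  ext p
  simp [zD, sSup_le_iff]

theorem zD_mul {a b : α} (hab : a * b ≤ a ⊓ b) : zD (a * b) = zD a ∩ zD b := by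
  ext p
  have mul_le_iff : a * b ≤ p.1 ↔ a ≤ p.1 ∨ b ≤ p.1 :=
    ⟨p.2.2 a b, fun h => hab.trans (h.elim inf_le_of_left_le inf_le_of_right_le)⟩
  exact (not_congr mul_le_iff).trans not_or

/-- The Zariski-open set `D(a)`, bundled as an element of the lattice of open sets. -/
def basicOpen (a : α) : Opens (SpecL α) :=
  ⟨zD a, isOpen_generateFrom_of_mem ⟨a, rfl⟩⟩

theorem isIdealLatticeHom_basicOpen (hmul : ∀ a b : α, a * b ≤ a ⊓ b) :
    IsIdealLatticeHom (basicOpen : α → Opens (SpecL α)) := by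
  refine ⟨fun A => Opens.ext ?_, Opens.ext zD_top, fun a b => Opens.ext (zD_mul (hmul a b))⟩
  rw [Opens.coe_sSup, Set.biUnion_image]
  exact zD_sSup A

end SpecL

section PrimeAt

variable {α : Type*} [CompleteLattice α] {X : Type*} [TopologicalSpace X]

/-- The element `Σ(φ)(x)` of `α`, defined for an arbitrary map `φ`; it is prime when `φ` is a
morphism of ideal lattices. -/
def primeAt (φ : α → Opens X) (x : X) : α :=
  sSup {c : α | IsCompactElement c ∧ x ∉ (φ c : Set X)}

theorem le_primeAt_iff [IsCompactlyGenerated α] {φ : α → Opens X}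
    (hφ : ∀ A : Set α, φ (sSup A) = sSup (φ '' A)) {a : α} {x : X} :
    a ≤ primeAt φ x ↔ x ∉ φ a := by
  have hmono : Monotone φ := OrderHomClass.mono (⟨φ, hφ⟩ : sSupHom α (Opens X))
  have notMem_primeAt : x ∉ φ (primeAt φ x) := by
    simp [primeAt, hφ, Opens.mem_sSup]
  refine ⟨fun ha hx => notMem_primeAt (hmono ha hx), fun hx => ?_⟩
  rw [← sSup_compact_le_eq a]
  exact sSup_le_sSup fun c hc => ⟨hc.1, fun hxc => hx (hmono hc.2 hxc)⟩

theorem setOf_not_le_primeAt [IsCompactlyGenerated α] {φ : α → Opens X}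
    (hφ : ∀ A : Set α, φ (sSup A) = sSup (φ '' A)) (a : α) :
    {x | ¬a ≤ primeAt φ x} = φ a :=
  Set.ext fun _ => (le_primeAt_iff hφ).not_left

theorem primeAt_comap_basicOpen [Mul α] [IsCompactlyGenerated α] (f : C(X, SpecL α)) (x : X) :
    primeAt (fun a => Opens.comap f (SpecL.basicOpen a)) x = (f x).1 := by
  have notMem_iff (c : α) : x ∉ Opens.comap f (SpecL.basicOpen c) ↔ c ≤ (f x).1 := not_not
  simp only [primeAt, SetLike.mem_coe, notMem_iff, sSup_compact_le_eq]

end PrimeAt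

namespace IsIdealLatticeHom

variable {α : Type*} [CompleteLattice α] [Mul α] {X : Type*} [TopologicalSpace X]

theorem comap {Y : Type*} [TopologicalSpace Y] {φ : α → Opens Y} (hφ : IsIdealLatticeHom φ)
    (f : C(X, Y)) : IsIdealLatticeHom fun a => Opens.comap f (φ a) := by
  refine ⟨fun A => ?_, ?_, fun a b => ?_⟩ <;> dsimp only
  · rw [hφ.1, map_sSup, Set.image_image]
  · rw [hφ.2.1, map_top]
  · rw [hφ.2.2]
    exact map_inf (Opens.comap f) (φ a) (φ b)

variable [IsCompactlyGenerated α] {φ : α → Opens X}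

theorem isPrimeElt_primeAt (hφ : IsIdealLatticeHom φ) (x : X) : IsPrimeElt (primeAt φ x) := by
  refine ⟨fun htop => ?_, fun a b hab => ?_⟩
  · have hx : x ∉ φ ⊤ := (le_primeAt_iff hφ.1).mp htop.ge
    exact hx (hφ.2.1 ▸ Opens.mem_top x)
  · have hx : ¬(x ∈ φ a ∧ x ∈ φ b) := by
      rw [le_primeAt_iff hφ.1, hφ.2.2] at hab
      exact hab
    rwa [le_primeAt_iff hφ.1, le_primeAt_iff hφ.1, ← not_and_or]

/-- The continuous map `Σ(φ) : X → Spec L` attached to a morphism `φ : L → L_open(X)`. -/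
def toSpec (hφ : IsIdealLatticeHom φ) : C(X, SpecL α) where
  toFun x := ⟨primeAt φ x, hφ.isPrimeElt_primeAt x⟩
  continuous_toFun := by
    refine continuous_generateFrom_iff.mpr ?_
    rintro _ ⟨a, rfl⟩
    change IsOpen {x | ¬a ≤ primeAt φ x}
    rw [setOf_not_le_primeAt hφ.1]
    exact (φ a).isOpen

theorem comap_toSpec_basicOpen (hφ : IsIdealLatticeHom φ) (a : α) :
    Opens.comap hφ.toSpec (SpecL.basicOpen a) = φ a :=
  Opens.ext (setOf_not_le_primeAt hφ.1 a)

end IsIdealLatticeHom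

theorem spec_adjunction_general {α : Type*} [CompleteLattice α] [Mul α] [IsCompactlyGenerated α]
    {X : Type*} [TopologicalSpace X] (hmul : ∀ a b : α, a * b ≤ a ⊓ b) :
    ∃ (S : {φ : α → Opens X // IsIdealLatticeHom φ} → {f : X → SpecL α // Continuous f})
      (T : {f : X → SpecL α // Continuous f} → {φ : α → Opens X // IsIdealLatticeHom φ}),
      (∀ φ : {φ : α → Opens X // IsIdealLatticeHom φ}, ∀ x : X,
        ((S φ).1 x).1 = sSup {c : α | IsCompactElement c ∧ x ∉ (φ.1 c : Set X)}) ∧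
      (∀ f : {f : X → SpecL α // Continuous f}, ∀ a : α,
        ((T f).1 a : Set X) = f.1 ⁻¹' zD a) ∧
      Function.LeftInverse T S ∧ Function.RightInverse T S := by
  refine ⟨fun φ => ⟨φ.2.toSpec, φ.2.toSpec.continuous⟩,
    fun f => ⟨fun a => Opens.comap ⟨f.1, f.2⟩ (SpecL.basicOpen a),
      (SpecL.isIdealLatticeHom_basicOpen hmul).comap ⟨f.1, f.2⟩⟩,
    fun _ _ => rfl, fun _ _ => rfl, fun φ => ?_, fun f => ?_⟩
  · exact Subtype.ext (funext φ.2.comap_toSpec_basicOpen)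
  · exact Subtype.ext (funext fun x => Subtype.ext (primeAt_comap_basicOpen ⟨f.1, f.2⟩ x))

/-- Adjunction: for an ideal lattice `L` and a spectral space `X`, the maps
`Σ : φ ↦ (x ↦ sup {c compact : x ∉ φ(c)})` and `Λ : f ↦ (a ↦ f⁻¹(D(a)))` are mutually
inverse bijections between ideal-lattice morphisms `L → L_open(X)` and continuous maps
`X → Spec L`. -/
theorem spec_adjunction {α : Type*} [CompleteLattice α] [Mul α]
    {X : Type*} [TopologicalSpace X] (hL : IsIdealLattice α) (hX : IsSpectralSpace X) :
    ∃ (S : {φ : α → Opens X // IsIdealLatticeHom φ} → {f : X → SpecL α // Continuous f})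
      (T : {f : X → SpecL α // Continuous f} → {φ : α → Opens X // IsIdealLatticeHom φ}),
      (∀ φ : {φ : α → Opens X // IsIdealLatticeHom φ}, ∀ x : X,
        ((S φ).1 x).1 = sSup {c : α | IsCompactElement c ∧ x ∉ (φ.1 c : Set X)}) ∧
      (∀ f : {f : X → SpecL α // Continuous f}, ∀ a : α,
        ((T f).1 a : Set X) = f.1 ⁻¹' zD a) ∧
      Function.LeftInverse T S ∧ Function.RightInverse T S := by
  have := hL.isCompactlyGenerated
  exact spec_adjunction_general hL.mul_le_inf
end
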